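/- Let 0 ≤ q < 1 and let Ω ∈ U_q(s_p, M_p) be a p×p matrix with inverse Σ = Ω^{-1}. Let Σ̂ ∈ ℝ^{p×p} be a symmetric matrix and let λ ≥ 0 satisfy λ ≥ 3‖Ω‖_{L1}‖Σ̂ − Σ‖_∞ and ‖Ω‖_{L1}^{−q} λ^{1−q} s_p ≤ 1/2. Let Ω̂ = (β̂_1,…,β̂_p) where, for each i, β̂_i is a SCIO column estimator (a global minimizer of β ↦ (1/2)βᵀΣ̂β − e_iᵀβ + λ|β|_1), and let Ω̃ be the symmetrization of Ω̂. Then ‖Ω̃ − Ω‖_∞ ≤ 4 ‖Ω‖_{L1} λ. -/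

import Mathlib

open Matrix
open scoped BigOperators

/-- The ℓ1 norm of a vector in ℝ^p. -/
noncomputable def vecL1 {p : ℕ} (a : Fin p → ℝ) : ℝ := ∑ i, |a i|

/-- The entrywise supremum norm of a p×p matrix. -/
noncomputable def matLinf {p : ℕ} (A : Matrix (Fin p) (Fin p) ℝ) : ℝ := ⨆ i, ⨆ j, |A i j|

/-- The maximum absolute column-sum norm of a p×p matrix. -/
noncomputable def matL1 {p : ℕ} (A : Matrix (Fin p) (Fin p) ℝ) : ℝ := ⨆ j, ∑ i, |A i j|

/-- The SCIO objective function β ↦ (1/2)βᵀ Σ̂ β − eᵀβ + λ|β|₁. -/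
noncomputable def scioObj {p : ℕ} (S : Matrix (Fin p) (Fin p) ℝ) (e : Fin p → ℝ)
    (lam : ℝ) (β : Fin p → ℝ) : ℝ :=
  (1 / 2) * (β ⬝ᵥ S.mulVec β) - e ⬝ᵥ β + lam * vecL1 β

/-- Symmetrization of a matrix: ω̃_ij = β̂_ij if |β̂_ij| ≤ |β̂_ji|, and β̂_ji otherwise. -/
noncomputable def symmetrize {p : ℕ} (A : Matrix (Fin p) (Fin p) ℝ) : Matrix (Fin p) (Fin p) ℝ :=
  fun i j => if |A i j| ≤ |A j i| then A i j else A j i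

lemma abs_le_matLinf {p : ℕ} (A : Matrix (Fin p) (Fin p) ℝ) (i j : Fin p) :
    |A i j| ≤ matLinf A :=
  (le_ciSup (f := fun j => |A i j|) (Set.finite_range _).bddAbove j).trans
    (le_ciSup (f := fun i => ⨆ j, |A i j|) (Set.finite_range _).bddAbove i)

lemma sum_abs_col_le_matL1 {p : ℕ} (A : Matrix (Fin p) (Fin p) ℝ) (j : Fin p) :
    ∑ i, |A i j| ≤ matL1 A :=
  le_ciSup (f := fun j => ∑ i, |A i j|) (Set.finite_range _).bddAbove j

lemma matL1_nonneg {p : ℕ} (A : Matrix (Fin p) (Fin p) ℝ) : 0 ≤ matL1 A :=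
  Real.iSup_nonneg fun _ => Finset.sum_nonneg fun _ _ => abs_nonneg _

lemma vecL1_nonneg {p : ℕ} (a : Fin p → ℝ) : 0 ≤ vecL1 a :=
  Finset.sum_nonneg fun _ _ => abs_nonneg _

lemma vecL1_add_le {p : ℕ} (a b : Fin p → ℝ) : vecL1 (a + b) ≤ vecL1 a + vecL1 b := by
  unfold vecL1
  rw [← Finset.sum_add_distrib]
  exact Finset.sum_le_sum fun i _ => abs_add_le _ _

lemma vecL1_smul {p : ℕ} (t : ℝ) (ht : 0 ≤ t) (a : Fin p → ℝ) :
    vecL1 (t • a) = t * vecL1 a := by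
  simp [vecL1, abs_mul, abs_of_nonneg ht, Finset.mul_sum]

lemma vecL1_single {p : ℕ} (k : Fin p) (c : ℝ) : vecL1 (Pi.single k c) = |c| := by
  unfold vecL1
  rw [Finset.sum_eq_single k]
  · simp
  · intro j _ hj
    simp [hj]
  · simp

/-- Hölder's inequality between the sup norm and the `ℓ1` norm. -/
lemma abs_dotProduct_le {p : ℕ} (a b : Fin p → ℝ) (c : ℝ) (ha : ∀ i, |a i| ≤ c) :
    |a ⬝ᵥ b| ≤ c * vecL1 b := by
  unfold dotProduct vecL1
  refine (Finset.abs_sum_le_sum_abs _ _).trans ?_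
  rw [Finset.mul_sum]
  refine Finset.sum_le_sum fun i _ => ?_
  rw [abs_mul]
  exact mul_le_mul_of_nonneg_right (ha i) (abs_nonneg _)

lemma nonneg_of_forall_small {a b : ℝ}
    (h : ∀ t : ℝ, 0 < t → t ≤ 1 → 0 ≤ t * a + t ^ 2 * b) : 0 ≤ a := by
  by_contra! ha
  have hd : 0 < |b| - a := by linarith [abs_nonneg b]
  have ht : 0 < -a / (|b| - a) := div_pos (by linarith) hd
  have h1 := h _ ht ((div_le_one hd).2 (by linarith [abs_nonneg b]))
  have h2 : 0 ≤ a + -a / (|b| - a) * b := by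
    refine nonneg_of_mul_nonneg_right (a := -a / (|b| - a)) ?_ ht
    linarith
  have h3 : -a / (|b| - a) * b ≤ -a / (|b| - a) * |b| :=
    mul_le_mul_of_nonneg_left (le_abs_self b) ht.le
  have h4 : -a / (|b| - a) * (|b| - a) = -a := div_mul_cancel₀ _ hd.ne'
  nlinarith

lemma nonneg_of_forall_large {a b : ℝ}
    (h : ∀ t : ℝ, 0 < t → 0 ≤ t * a + t ^ 2 * b) : 0 ≤ b := by
  by_contra! hb
  have ht : 0 < (|a| + 1) / -b := div_pos (by positivity) (by linarith)
  have h1 := h _ ht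
  have h2 : 0 ≤ a + (|a| + 1) / -b * b := by
    refine nonneg_of_mul_nonneg_right (a := (|a| + 1) / -b) ?_ ht
    linarith
  have h3 : (|a| + 1) / -b * b = -(|a| + 1) := by
    rw [div_neg, neg_mul, div_mul_cancel₀ _ hb.ne]
  linarith [le_abs_self a]

lemma scioObj_add_smul {p : ℕ} {S : Matrix (Fin p) (Fin p) ℝ} (hS : S.IsSymm)
    (e : Fin p → ℝ) (lam : ℝ) (b v : Fin p → ℝ) (t : ℝ) :
    scioObj S e lam (b + t • v) = scioObj S e lam b + t * ((S *ᵥ b - e) ⬝ᵥ v)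
      + t ^ 2 * (1 / 2 * (v ⬝ᵥ S *ᵥ v)) + lam * (vecL1 (b + t • v) - vecL1 b) := by
  have hc : b ⬝ᵥ S *ᵥ v = v ⬝ᵥ S *ᵥ b := by
    rw [dotProduct_mulVec, ← mulVec_transpose, hS.eq, dotProduct_comm]
  have hc2 : (S *ᵥ b) ⬝ᵥ v = v ⬝ᵥ S *ᵥ b := dotProduct_comm _ _
  simp only [scioObj, mulVec_add, mulVec_smul, add_dotProduct, dotProduct_add, smul_dotProduct,
    dotProduct_smul, sub_dotProduct, smul_eq_mul, hc, hc2]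
  ring

section Minimizer

variable {p : ℕ} {S : Matrix (Fin p) (Fin p) ℝ} {e b : Fin p → ℝ} {lam : ℝ}

/-- Variational inequality characterizing first-order optimality. -/
lemma scio_variational (hS : S.IsSymm) (hlam : 0 ≤ lam)
    (hmin : ∀ β, scioObj S e lam b ≤ scioObj S e lam β) (v : Fin p → ℝ) :
    0 ≤ (S *ᵥ b - e) ⬝ᵥ v + lam * (vecL1 (b + v) - vecL1 b) := by
  refine nonneg_of_forall_small (b := 1 / 2 * (v ⬝ᵥ S *ᵥ v)) fun t ht ht1 => ?_
  have h := hmin (b + t • v)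
  rw [scioObj_add_smul hS] at h
  have hconv : vecL1 (b + t • v) ≤ (1 - t) * vecL1 b + t * vecL1 (b + v) := by
    have heq : b + t • v = (1 - t) • b + t • (b + v) := by
      ext i
      simp
      ring
    rw [heq, ← vecL1_smul _ (sub_nonneg.2 ht1), ← vecL1_smul _ ht.le]
    exact vecL1_add_le _ _
  nlinarith [mul_le_mul_of_nonneg_left hconv hlam]

/-- Existence of a minimizer forces the quadratic form to be nonnegative. -/
lemma scio_quadratic_nonneg (hS : S.IsSymm) (hlam : 0 ≤ lam)
    (hmin : ∀ β, scioObj S e lam b ≤ scioObj S e lam β) (v : Fin p → ℝ) :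
    0 ≤ v ⬝ᵥ S *ᵥ v := by
  suffices 0 ≤ 1 / 2 * (v ⬝ᵥ S *ᵥ v) by linarith
  refine nonneg_of_forall_large (a := (S *ᵥ b - e) ⬝ᵥ v + lam * vecL1 v) fun t ht => ?_
  have h := hmin (b + t • v)
  rw [scioObj_add_smul hS] at h
  have htri := vecL1_add_le b (t • v)
  rw [vecL1_smul _ ht.le] at htri
  nlinarith [mul_le_mul_of_nonneg_left htri hlam]

lemma scio_abs_gradient_le (hS : S.IsSymm) (hlam : 0 ≤ lam)
    (hmin : ∀ β, scioObj S e lam b ≤ scioObj S e lam β) (k : Fin p) :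
    |(S *ᵥ b - e) k| ≤ lam := by
  have key (c : ℝ) (hc : |c| = 1) : 0 ≤ (S *ᵥ b - e) k * c + lam := by
    have h := scio_variational hS hlam hmin (Pi.single k c)
    have htri := vecL1_add_le b (Pi.single k c)
    rw [vecL1_single, hc] at htri
    rw [dotProduct_single] at h
    nlinarith [mul_le_mul_of_nonneg_left htri hlam]
  have h1 := key 1 (by simp)
  have h2 := key (-1) (by simp)
  exact abs_le.2 ⟨by linarith, by linarith⟩

/-- Comparison of `ℓ1` norms of the minimizer and of an approximate solution of `S β = e`. -/
lemma scio_vecL1_le (hS : S.IsSymm) (hlam : 0 < lam)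
    (hmin : ∀ β, scioObj S e lam b ≤ scioObj S e lam β) (β : Fin p → ℝ)
    (hβ : ∀ k, |(S *ᵥ β - e) k| ≤ lam / 3) :
    vecL1 b ≤ vecL1 β + vecL1 (b - β) / 3 := by
  have h1 := scio_variational hS hlam.le hmin (-(b - β))
  have hb : b + -(b - β) = β := by abel
  rw [hb, dotProduct_neg] at h1
  have h2 := scio_quadratic_nonneg hS hlam.le hmin (b - β)
  have h3 := (abs_le.1 (abs_dotProduct_le _ (b - β) _ hβ)).1
  have h4 : (b - β) ⬝ᵥ S *ᵥ (b - β)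
      = (S *ᵥ b - e) ⬝ᵥ (b - β) - (S *ᵥ β - e) ⬝ᵥ (b - β) := by
    rw [dotProduct_comm, ← sub_dotProduct, mulVec_sub]
    congr 1
    abel
  refine le_of_mul_le_mul_left ?_ hlam
  linarith

end Minimizer

/-- An `ℓ1` bound by a sup-norm bound on a thresholded support, using weak sparsity. -/
lemma vecL1_sub_le_of_weak_sparse {p : ℕ} {b β : Fin p → ℝ} {q s t H : ℝ}
    (hq0 : 0 ≤ q) (hq1 : q < 1) (ht : 0 < t) (hsp : ∑ i, |β i| ^ q ≤ s)
    (hb : vecL1 b ≤ vecL1 β + vecL1 (b - β) / 3) (hH0 : 0 ≤ H) (hH : ∀ k, |(b - β) k| ≤ H) :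
    vecL1 (b - β) ≤ 3 * (t ^ (-q) * s * (H + t)) := by
  have hpt (i : Fin p) : |(b - β) i| + |β i| - |b i|
      ≤ 2 * (t ^ (-q) * |β i| ^ q * (H + t)) := by
    have hw : t ^ (-q) * |β i| ^ q = (|β i| / t) ^ q := by
      rw [Real.div_rpow (abs_nonneg _) ht.le, Real.rpow_neg ht.le]
      ring
    have hw0 : 0 ≤ (|β i| / t) ^ q := by positivity
    rw [hw]
    have hsub : |(b - β) i| = |b i - β i| := rfl
    rcases le_total t |β i| with hle | hle
    · have h1 : 1 ≤ (|β i| / t) ^ q := Real.one_le_rpow ((one_le_div ht).2 hle) hq0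
      have h2 : |β i| - |b i| ≤ |b i - β i| := abs_sub_comm (b i) (β i) ▸ abs_sub_abs_le_abs_sub _ _
      nlinarith [hH i]
    · have h1 : |β i| / t ≤ (|β i| / t) ^ q :=
        Real.self_le_rpow_of_le_one (by positivity) ((div_le_one ht).2 hle) hq1.le
      have h2 : |b i - β i| ≤ |b i| + |β i| := abs_sub _ _
      have h3 := (div_le_iff₀ ht).1 h1
      nlinarith
  have hsum := Finset.sum_le_sum fun i (_ : i ∈ Finset.univ) => hpt i
  rw [Finset.sum_sub_distrib, Finset.sum_add_distrib, ← Finset.mul_sum, ← Finset.sum_mul,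
    ← Finset.mul_sum] at hsum
  change vecL1 (b - β) + vecL1 β - vecL1 b ≤ _ at hsum
  have hs : t ^ (-q) * ∑ i, |β i| ^ q ≤ t ^ (-q) * s :=
    mul_le_mul_of_nonneg_left hsp (by positivity)
  have hs' := mul_le_mul_of_nonneg_right hs (add_nonneg hH0 ht.le)
  linarith

/-- Sup-norm error bound for a single SCIO column estimator. -/
lemma scio_column_bound {p : ℕ} {q s lam : ℝ} (hq0 : 0 ≤ q) (hq1 : q < 1)
    {Ω S : Matrix (Fin p) (Fin p) ℝ} (hΩsym : Ω.IsSymm) (hΩpd : Ω.PosDef) (i : Fin p)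
    (hΩs : ∑ k, |Ω k i| ^ q ≤ s) (hS : S.IsSymm) (hlam0 : 0 ≤ lam)
    (hlam1 : 3 * matL1 Ω * matLinf (S - Ω⁻¹) ≤ lam)
    (hlam2 : (matL1 Ω) ^ (-q) * lam ^ (1 - q) * s ≤ 1 / 2) {b : Fin p → ℝ}
    (hmin : ∀ β, scioObj S (Pi.single i 1) lam b ≤ scioObj S (Pi.single i 1) lam β)
    (k : Fin p) : |b k - Ω k i| ≤ 4 * matL1 Ω * lam := by
  set β : Fin p → ℝ := fun k => Ω k i with hβdef
  set e : Fin p → ℝ := Pi.single i 1 with he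
  set A := matL1 Ω with hA
  set D := matLinf (S - Ω⁻¹) with hD
  have hA0 : 0 < A := by
    have h1 : |Ω i i| ≤ ∑ k, |Ω k i| :=
      Finset.single_le_sum (f := fun k => |Ω k i|) (fun _ _ => abs_nonneg _) (Finset.mem_univ i)
    exact (abs_pos.2 hΩpd.diag_pos.ne').trans_le (h1.trans (sum_abs_col_le_matL1 Ω i))
  have hD0 : 0 ≤ D := (abs_nonneg _).trans (abs_le_matLinf (S - Ω⁻¹) i i)
  have hdet : IsUnit Ω.det := hΩpd.det_pos.ne'.isUnit
  have hΩe : β = Ω *ᵥ e := by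
    ext k
    simp [he, hβdef]
  have hTβ : Ω⁻¹ *ᵥ β = e := by
    rw [hΩe, mulVec_mulVec, nonsing_inv_mul _ hdet, one_mulVec]
  have hβ1 : vecL1 β ≤ A := sum_abs_col_le_matL1 Ω i
  have hpert (v : Fin p → ℝ) (k : Fin p) : |((S - Ω⁻¹) *ᵥ v) k| ≤ D * vecL1 v :=
    abs_dotProduct_le _ _ _ fun j => abs_le_matLinf _ _ _
  have hβ (k : Fin p) : |(S *ᵥ β - e) k| ≤ lam / 3 := by
    rw [← hTβ, ← sub_mulVec]
    nlinarith [hpert β k]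
  have hgrad := scio_abs_gradient_le hS hlam0 hmin
  have hTh (k : Fin p) : |(Ω⁻¹ *ᵥ (b - β)) k| ≤ 4 / 3 * lam + D * vecL1 (b - β) := by
    have heq : (Ω⁻¹ *ᵥ (b - β)) k
        = (S *ᵥ b - e) k - (S *ᵥ β - e) k - ((S - Ω⁻¹) *ᵥ (b - β)) k := by
      simp only [sub_mulVec, mulVec_sub, Pi.sub_apply]
      ring
    have h1 := abs_le.1 (hgrad k)
    have h2 := abs_le.1 (hβ k)
    have h3 := abs_le.1 (hpert (b - β) k)
    rw [heq]
    exact abs_le.2 ⟨by linarith, by linarith⟩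
  have hL0 := vecL1_nonneg (b - β)
  have hh (k : Fin p) : |(b - β) k| ≤ 4 / 3 * A * lam + lam / 3 * vecL1 (b - β) := by
    have heq : b - β = Ω *ᵥ (Ω⁻¹ *ᵥ (b - β)) := by
      rw [mulVec_mulVec, mul_nonsing_inv _ hdet, one_mulVec]
    have hcomm : (Ω *ᵥ (Ω⁻¹ *ᵥ (b - β))) k = (Ω⁻¹ *ᵥ (b - β)) ⬝ᵥ (fun j => Ω k j) :=
      dotProduct_comm _ _
    have hrow : vecL1 (fun j => Ω k j) ≤ A := by
      have h : (fun j => Ω k j) = fun j => Ω j k := funext fun j => hΩsym.apply j k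
      rw [h]
      exact sum_abs_col_le_matL1 Ω k
    have h1 := abs_dotProduct_le _ (fun j => Ω k j) _ hTh
    rw [← hcomm, ← heq] at h1
    have h2 : 0 ≤ 4 / 3 * lam + D * vecL1 (b - β) := by positivity
    have h3 := mul_le_mul_of_nonneg_left hrow h2
    have h4 := mul_le_mul_of_nonneg_right hlam1 hL0
    linarith
  change |(b - β) k| ≤ _
  rcases hlam0.eq_or_lt with h0 | hpos
  · have h := hh k
    rw [← h0] at h ⊢
    linarith
  have hH (k : Fin p) : |(b - β) k| ≤ ‖b - β‖ := norm_le_pi_norm (b - β) k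
  have hHle : ‖b - β‖ ≤ 4 / 3 * A * lam + lam / 3 * vecL1 (b - β) :=
    (pi_norm_le_iff_of_nonneg (by positivity)).2 hh
  have hL := vecL1_sub_le_of_weak_sparse hq0 hq1 (mul_pos hA0 hpos) hΩs
    (scio_vecL1_le hS hpos hmin β hβ) (norm_nonneg _) hH
  have hpow : lam * ((A * lam) ^ (-q) * s) ≤ 1 / 2 := by
    have h : A ^ (-q) * lam ^ (1 - q) * s = lam * ((A * lam) ^ (-q) * s) := by
      rw [Real.mul_rpow hA0.le hpos.le, sub_eq_add_neg, Real.rpow_add hpos, Real.rpow_one]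
      ring
    exact h ▸ hlam2
  have hAl : 0 < A * lam := mul_pos hA0 hpos
  have h1 := mul_le_mul_of_nonneg_left hL hpos.le
  have h2 := mul_le_mul_of_nonneg_right hpow (add_nonneg (norm_nonneg (b - β)) hAl.le)
  linarith [hH k]

/-- Theorem 2, entrywise sup-norm bound: the symmetrized SCIO estimator Ω̃ satisfies
‖Ω̃ − Ω‖_∞ ≤ 4 ‖Ω‖_{L1} λ. -/
theorem scio_matrix_linf_bound {p : ℕ} (q s M : ℝ) (hq0 : 0 ≤ q) (hq1 : q < 1)
    (hs : 0 < s) (hM : 0 < M)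
    (Ω : Matrix (Fin p) (Fin p) ℝ) (hΩsym : Ω.IsSymm) (hΩpd : Ω.PosDef)
    (hΩs : ∀ j, ∑ i, |Ω i j| ^ q ≤ s) (hΩM : matL1 Ω ≤ M)
    (Shat : Matrix (Fin p) (Fin p) ℝ) (hSsym : Shat.IsSymm)
    (lam : ℝ) (hlam0 : 0 ≤ lam)
    (hlam1 : 3 * matL1 Ω * matLinf (Shat - Ω⁻¹) ≤ lam)
    (hlam2 : (matL1 Ω) ^ (-q) * lam ^ (1 - q) * s ≤ 1 / 2)
    (Ωhat : Matrix (Fin p) (Fin p) ℝ)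
    (hmin : ∀ (i : Fin p) (β : Fin p → ℝ),
      scioObj Shat (Pi.single i 1) lam (fun k => Ωhat k i) ≤
        scioObj Shat (Pi.single i 1) lam β) :
    matLinf (symmetrize Ωhat - Ω) ≤ 4 * matL1 Ω * lam := by
  have hA0 := matL1_nonneg Ω
  have hcol (i k : Fin p) : |Ωhat k i - Ω k i| ≤ 4 * matL1 Ω * lam :=
    scio_column_bound hq0 hq1 hΩsym hΩpd i (hΩs i) hSsym hlam0 hlam1 hlam2 (hmin i) k
  refine Real.iSup_le (fun i => Real.iSup_le (fun j => ?_) (by positivity)) (by positivity)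
  rw [Matrix.sub_apply, symmetrize]
  split_ifs
  · exact hcol j i
  · rw [← hΩsym.apply i j]
    exact hcol i j
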